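/- arXiv:2212.03957 — 3 statements merged into one kernel-verified Lean document; each statement's English description precedes it below -/
import Mathlib

section
/- Let G be a simple graph on n vertices equipped with a linear order ≺ that is α-bounded, i.e., every vertex has at most α neighbors strictly greater than it with respect to ≺. Then for all natural numbers c and i with c+1 ≤ i, the number of i-element vertex sets W that are c-dense in G (every vertex of W is non-adjacent to at most c of the other vertices of W) is at most n^{c+1} · ((c+1)·α)^{i-(c+1)}. -/
/-!
Let `W` be a `c`-dense set with `c + 1 ≤ i` elements and let `B` be the set of its `c + 1` smallest
elements. Each `w ∈ W \ B` has at most `c` non-neighbors in `W`, hence is adjacent to some `b ∈ B`,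
and `b < w`. So `W \ B` lies in the union `N` of the upper neighborhoods of the elements of `B`, and
`N` has at most `(c + 1) * α` elements. There are at most `n.choose (c + 1)` choices for `B`, and for
each of them at most `((c + 1) * α).choose (i - (c + 1))` choices for `W \ B`.
-/

/-- An initial segment of prescribed size of a finite set in a linear order. -/
lemma exists_initial_subset {V : Type*} [LinearOrder V] (W : Finset V) (k : ℕ)
    (hk : k ≤ W.card) :
    ∃ B ⊆ W, B.card = k ∧ ∀ b ∈ B, ∀ w ∈ W, w ∉ B → b < w := by
  induction k with
  | zero => exact ⟨∅, by simp, by simp, by simp⟩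
  | succ k ih =>
    obtain ⟨B, hBW, hcard, hB⟩ := ih (by omega)
    have hne : (W \ B).Nonempty := by
      rw [← Finset.card_pos, Finset.card_sdiff_of_subset hBW]
      omega
    have hm := Finset.min'_mem _ hne
    have hmin : ∀ w ∈ W \ B, (W \ B).min' hne ≤ w := fun w hw => Finset.min'_le _ w hw
    generalize (W \ B).min' hne = m at hm hmin
    rw [Finset.mem_sdiff] at hm
    refine ⟨insert m B, Finset.insert_subset hm.1 hBW, ?_, ?_⟩
    · rw [Finset.card_insert_of_notMem hm.2, hcard]
    · intro b hb w hw hwB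
      rw [Finset.mem_insert, not_or] at hwB
      rcases Finset.mem_insert.1 hb with rfl | hb
      · exact lt_of_le_of_ne (hmin w (Finset.mem_sdiff.2 ⟨hw, hwB.2⟩)) (Ne.symm hwB.1)
      · exact hB b hb w hw hwB.2

/-- Let `G` be a simple graph on `n` vertices with a linear order on the
vertices that is `α`-bounded (every vertex has at most `α` neighbors strictly above it).
Then for all `c` and `i` with `c + 1 ≤ i`, the number of `i`-element vertex sets `W` that
are `c`-dense in `G` (every vertex of `W` is non-adjacent to at most `c` of the other
vertices of `W`) is at most `n ^ (c + 1) * ((c + 1) * α) ^ (i - (c + 1))`. -/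
theorem count_cDense_sets_le {V : Type*} [Fintype V] [DecidableEq V] [LinearOrder V]
    (G : SimpleGraph V) [DecidableRel G.Adj] (α c i : ℕ) (hci : c + 1 ≤ i)
    (hbound : ∀ v : V, (Finset.univ.filter (fun u => G.Adj v u ∧ v < u)).card ≤ α) :
    (Finset.univ.filter (fun W : Finset V => W.card = i ∧
        ∀ v ∈ W, (W.filter (fun u => u ≠ v ∧ ¬ G.Adj v u)).card ≤ c)).card
      ≤ (Fintype.card V) ^ (c + 1) * ((c + 1) * α) ^ (i - (c + 1)) := by
  let N : Finset V → Finset V := fun B =>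
    B.biUnion fun b => Finset.univ.filter (fun u => G.Adj b u ∧ b < u)
  have hN : ∀ B : Finset V, B.card = c + 1 → (N B).card ≤ (c + 1) * α := by
    intro B hB
    rw [← hB]
    exact Finset.card_biUnion_le_card_mul _ _ _ fun b _ => hbound b
  refine (Finset.card_le_card (t := (Finset.univ.powersetCard (c + 1)).biUnion fun B =>
    ((N B).powersetCard (i - (c + 1))).image (B ∪ ·)) ?_).trans ?_
  · intro W hW
    obtain ⟨hWi, hdense⟩ := (Finset.mem_filter.1 hW).2
    obtain ⟨B, hBW, hBc, hB⟩ := exists_initial_subset W (c + 1) (hWi ▸ hci)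
    refine Finset.mem_biUnion.2 ⟨B, by simp [hBc], Finset.mem_image.2 ⟨W \ B, ?_, ?_⟩⟩
    · rw [Finset.mem_powersetCard]
      refine ⟨fun w hw => ?_, by rw [Finset.card_sdiff_of_subset hBW, hWi, hBc]⟩
      obtain ⟨hwW, hwB⟩ := Finset.mem_sdiff.1 hw
      -- Otherwise all `c + 1` elements of `B` would be non-neighbors of `w` in `W`.
      obtain ⟨b, hb, hadj⟩ : ∃ b ∈ B, G.Adj w b := by
        by_contra! hcon
        have hsub : B ⊆ W.filter (fun u => u ≠ w ∧ ¬ G.Adj w u) := fun b hb =>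
          Finset.mem_filter.2 ⟨hBW hb, fun h => hwB (h ▸ hb), hcon b hb⟩
        have h1 := Finset.card_le_card hsub
        have h2 := hdense w hwW
        omega
      exact Finset.mem_biUnion.2 ⟨b, hb, Finset.mem_filter.2
        ⟨Finset.mem_univ _, hadj.symm, hB b hb w hwW hwB⟩⟩
    · exact Finset.union_sdiff_of_subset hBW
  · refine (Finset.card_biUnion_le_card_mul _ _ (((c + 1) * α) ^ (i - (c + 1))) ?_).trans ?_
    · intro B hB
      refine Finset.card_image_le.trans ?_
      rw [Finset.card_powersetCard]
      exact (Nat.choose_le_pow _ _).trans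
        (Nat.pow_le_pow_left (hN B (Finset.mem_powersetCard.1 hB).2) _)
    · rw [Finset.card_powersetCard, Finset.card_univ]
      exact Nat.mul_le_mul_right _ (Nat.choose_le_pow _ _)
end

section
/- Let G be a simple graph on n vertices with m edges, equipped with a linear order ≺ that is α-bounded, i.e., every vertex has at most α neighbors strictly greater than it with respect to ≺. For all natural numbers c and i with c+1 ≤ i, the sum, over all i-element vertex sets W that are c-dense in G (every vertex of W is non-adjacent to at most c of the other vertices of W), of the total degree ∑_{v ∈ S(W)} deg(v) of the c+1 smallest elements S(W) of W with respect to ≺, is at most ((c+1)·α)^{i-(c+1)} · 2m · n^{c}. -/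
/-!
A `c`-dense set `W` is controlled by the set `S` of its `c + 1` smallest elements: a vertex of
`W \ S` is non-adjacent to at most `c` other vertices of `W`, so it has a neighbor in `S`, and that
neighbor is smaller. Hence `W \ S` lies in the union of the up-neighborhoods of the elements of
`S`, a set of at most `(c + 1) * α` vertices, and at most `((c + 1) * α) ^ (i - (c + 1))` sets `W`
of size `i` share the same `S` (`card_cDense_fiber_le`). Summing degrees over all `S` of size
`c + 1` counts each `deg v` at most `n ^ c` times (`sum_powersetCard_sum_le`), and the degrees add
up to `2 * m`.
-/

/-- For a finite set `W` in a linearly ordered type, `smallestElems c W` is the set of the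
`c` smallest elements of `W` (the first `c` elements of the sorted list of `W`). -/
def smallestElems {V : Type*} [DecidableEq V] [LinearOrder V] (c : ℕ) (W : Finset V) :
    Finset V :=
  ((W.sort (· ≤ ·)).take c).toFinset

section SmallestElems

variable {V : Type*} [DecidableEq V] [LinearOrder V]

lemma smallestElems_subset (k : ℕ) (W : Finset V) : smallestElems k W ⊆ W := by
  intro x hx
  rw [smallestElems, List.mem_toFinset] at hx
  simpa using List.mem_of_mem_take hx

lemma card_smallestElems {k : ℕ} {W : Finset V} (h : k ≤ W.card) :
    (smallestElems k W).card = k := by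
  rw [smallestElems, List.toFinset_card_of_nodup
    ((W.sort_nodup (· ≤ ·)).sublist (List.take_sublist _ _))]
  simpa using h

lemma lt_of_mem_smallestElems {k : ℕ} {W : Finset V} {s w : V} (hs : s ∈ smallestElems k W)
    (hw : w ∈ W) (hwS : w ∉ smallestElems k W) : s < w := by
  have hne : s ≠ w := fun h => hwS (h ▸ hs)
  rw [smallestElems, List.mem_toFinset] at hs hwS
  have hsorted : (W.sort (· ≤ ·)).Pairwise (· ≤ ·) := W.pairwise_sort (· ≤ ·)
  have hmem : w ∈ W.sort (· ≤ ·) := by simpa using hw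
  rw [← List.take_append_drop k (W.sort (· ≤ ·))] at hsorted hmem
  have hdrop := (List.mem_append.1 hmem).resolve_left hwS
  exact lt_of_le_of_ne ((List.pairwise_append.1 hsorted).2.2 s hs w hdrop) hne

end SmallestElems

section Counting

variable {V : Type*} [Fintype V] [DecidableEq V]

/-- Each `v` lies in at most `n ^ c` sets of size `c + 1`, since removing `v` from such a set
loses no information and leaves a set of size `c`. -/
lemma sum_powersetCard_sum_le (f : V → ℕ) (c : ℕ) :
    ∑ S ∈ Finset.powersetCard (c + 1) (Finset.univ : Finset V), ∑ v ∈ S, f v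
      ≤ (∑ v, f v) * Fintype.card V ^ c := by
  have hcomm : ∑ S ∈ Finset.powersetCard (c + 1) (Finset.univ : Finset V), ∑ v ∈ S, f v
      = ∑ v, ∑ S ∈ (Finset.powersetCard (c + 1) (Finset.univ : Finset V)).filter (v ∈ ·), f v :=
    Finset.sum_comm' (by simp)
  rw [hcomm, Finset.sum_mul]
  refine Finset.sum_le_sum fun v _ => ?_
  rw [Finset.sum_const, smul_eq_mul, mul_comm]
  refine Nat.mul_le_mul_left _ ?_
  calc ((Finset.powersetCard (c + 1) (Finset.univ : Finset V)).filter (v ∈ ·)).card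
      ≤ (Finset.powersetCard c (Finset.univ : Finset V)).card := by
        refine Finset.card_le_card_of_injOn (fun S => S.erase v) ?_ ?_
        · intro S hS
          simp only [Finset.coe_filter, Finset.mem_powersetCard_univ, Set.mem_ofPred_eq] at hS
          simp [Finset.card_erase_of_mem hS.2, hS.1]
        · intro S hS T hT h
          simp only [Finset.coe_filter, Set.mem_ofPred_eq] at hS hT
          have h' : S.erase v = T.erase v := h
          rw [← Finset.insert_erase hS.2, h', Finset.insert_erase hT.2]
    _ ≤ Fintype.card V ^ c := by
        rw [Finset.card_powersetCard, Finset.card_univ]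
        exact Nat.choose_le_pow _ _

variable [LinearOrder V] (G : SimpleGraph V) [DecidableRel G.Adj]

/-- In a `c`-dense set, every vertex outside the `c + 1` smallest has a neighbor among them. -/
lemma exists_adj_smallestElems {c : ℕ} {W : Finset V} (hcard : c + 1 ≤ W.card)
    (hW : ∀ v ∈ W, (W.filter (fun u => u ≠ v ∧ ¬ G.Adj v u)).card ≤ c) {w : V} (hw : w ∈ W)
    (hwS : w ∉ smallestElems (c + 1) W) : ∃ s ∈ smallestElems (c + 1) W, G.Adj s w := by
  by_contra! hcon
  have hsub : smallestElems (c + 1) W ⊆ W.filter (fun u => u ≠ w ∧ ¬ G.Adj w u) := by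
    intro s hs
    exact Finset.mem_filter.2 ⟨smallestElems_subset _ _ hs, fun h => hwS (h ▸ hs),
      fun h => hcon s hs h.symm⟩
  have h1 := Finset.card_le_card hsub
  rw [card_smallestElems hcard] at h1
  have h2 := hW w hw
  omega

/-- A `c`-dense set `W` with prescribed `c + 1` smallest elements `S` is determined by `W \ S`,
which is a subset of the up-neighborhood of `S`. -/
lemma card_cDense_fiber_le {α c i : ℕ} (hci : c + 1 ≤ i)
    (hbound : ∀ v : V, (Finset.univ.filter (fun u => G.Adj v u ∧ v < u)).card ≤ α)
    {S : Finset V} (hS : S.card = c + 1) :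
    ((Finset.univ.filter (fun W : Finset V => W.card = i ∧
        ∀ v ∈ W, (W.filter (fun u => u ≠ v ∧ ¬ G.Adj v u)).card ≤ c)).filter
      (fun W => smallestElems (c + 1) W = S)).card ≤ ((c + 1) * α) ^ (i - (c + 1)) := by
  set N : Finset V := S.biUnion fun v => Finset.univ.filter (fun u => G.Adj v u ∧ v < u) with hN
  have hNcard : N.card ≤ (c + 1) * α := hS ▸ Finset.card_biUnion_le_card_mul S _ α
    fun v _ => hbound v
  calc _ ≤ (Finset.powersetCard (i - (c + 1)) N).card := by
        refine Finset.card_le_card_of_injOn (fun W => W \ S) ?_ ?_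
        · intro W hW
          simp only [Finset.coe_filter, Finset.mem_filter, Finset.mem_univ, true_and,
            Set.mem_ofPred_eq] at hW
          obtain ⟨⟨hWi, hdense⟩, hWS⟩ := hW
          have hSW : S ⊆ W := hWS ▸ smallestElems_subset _ _
          rw [Finset.mem_coe, Finset.mem_powersetCard]
          refine ⟨fun w hw => ?_, by rw [Finset.card_sdiff_of_subset hSW, hWi, hS]⟩
          obtain ⟨hwW, hwS⟩ := Finset.mem_sdiff.1 hw
          rw [← hWS] at hwS
          obtain ⟨s, hs, hadj⟩ := exists_adj_smallestElems G (hWi ▸ hci) hdense hwW hwS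
          have hlt := lt_of_mem_smallestElems hs hwW hwS
          rw [hWS] at hs
          exact Finset.mem_biUnion.2 ⟨s, hs, by simp [hadj, hlt]⟩
        · intro W hW W' hW' h
          simp only [Finset.coe_filter, Set.mem_ofPred_eq] at hW hW'
          have h' : W \ S = W' \ S := h
          have hSW : S ⊆ W := hW.2 ▸ smallestElems_subset _ _
          have hSW' : S ⊆ W' := hW'.2 ▸ smallestElems_subset _ _
          rw [← Finset.sdiff_union_of_subset hSW, h', Finset.sdiff_union_of_subset hSW']
    _ ≤ N.card ^ (i - (c + 1)) := by
        rw [Finset.card_powersetCard]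
        exact Nat.choose_le_pow _ _
    _ ≤ _ := Nat.pow_le_pow_left hNcard _

end Counting

/-- Let `G` be a simple graph on `n` vertices with `m` edges, equipped
with an `α`-bounded linear order on the vertices (every vertex has at most `α` neighbors
strictly above it). For all `c` and `i` with `c + 1 ≤ i`, the sum, over all `i`-element
vertex sets `W` that are `c`-dense in `G`, of the total degree of the `c + 1` smallest
elements of `W`, is at most `((c + 1) * α) ^ (i - (c + 1)) * 2 * m * n ^ c`. -/
theorem sum_degrees_smallest_cDense_le {V : Type*} [Fintype V] [DecidableEq V]
    [LinearOrder V] (G : SimpleGraph V) [DecidableRel G.Adj] (α c i : ℕ) (hci : c + 1 ≤ i)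
    (hbound : ∀ v : V, (Finset.univ.filter (fun u => G.Adj v u ∧ v < u)).card ≤ α) :
    ∑ W ∈ Finset.univ.filter (fun W : Finset V => W.card = i ∧
        ∀ v ∈ W, (W.filter (fun u => u ≠ v ∧ ¬ G.Adj v u)).card ≤ c),
      ∑ v ∈ smallestElems (c + 1) W, G.degree v
      ≤ ((c + 1) * α) ^ (i - (c + 1)) * (2 * G.edgeFinset.card) * (Fintype.card V) ^ c := by
  have hmaps : ∀ W ∈ Finset.univ.filter (fun W : Finset V => W.card = i ∧
        ∀ v ∈ W, (W.filter (fun u => u ≠ v ∧ ¬ G.Adj v u)).card ≤ c),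
      smallestElems (c + 1) W ∈ Finset.powersetCard (c + 1) (Finset.univ : Finset V) := by
    intro W hW
    have hWi := (Finset.mem_filter.1 hW).2.1
    exact Finset.mem_powersetCard_univ.2 (card_smallestElems (hWi ▸ hci))
  rw [← Finset.sum_fiberwise_of_maps_to hmaps]
  calc _ ≤ ∑ S ∈ Finset.powersetCard (c + 1) (Finset.univ : Finset V),
          ((c + 1) * α) ^ (i - (c + 1)) * ∑ v ∈ S, G.degree v := by
        refine Finset.sum_le_sum fun S hS => ?_
        rw [Finset.sum_congr rfl fun W hW => by rw [(Finset.mem_filter.1 hW).2],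
          Finset.sum_const, smul_eq_mul]
        exact Nat.mul_le_mul_right _
          (card_cDense_fiber_le G hci hbound (Finset.mem_powersetCard_univ.1 hS))
    _ ≤ _ := by
        rw [← Finset.mul_sum, mul_assoc, ← G.sum_degrees_eq_twice_card_edges]
        exact Nat.mul_le_mul_left _ (sum_powersetCard_sum_le _ c)
end

section
/- Let X₁, …, X_r be real-valued random variables on a probability space with 0 ≤ X_i ≤ M almost surely for every i, where M > 0, and let λ be a real number with 0 ≤ λ < 1. Suppose that for all indices 1 ≤ i ≤ j ≤ r, Cov(X_i, X_j) ≤ λ^{j-i} · Var(X_i). Then Var(∑_{i=1}^{r} X_i) ≤ (2M/(1-λ)) · E[∑_{i=1}^{r} X_i]. -/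
/-!
The variance of the sum is `∑ i, ∑ j, Cov(X i, X j)`. By symmetry of the covariance each term is
at most `U i j + U j i`, where `U i j` is `λ ^ (j - i) * Var (X i)` for `i ≤ j` and zero otherwise,
so the double sum is at most `2 * ∑ i, ∑ j, U i j`. A geometric series bounds the inner sum by
`Var (X i) / (1 - λ)`, and `0 ≤ X i ≤ M` gives `Var (X i) ≤ M * E[X i]`.
-/

open MeasureTheory ProbabilityTheory

/-- Covariance of two real-valued random variables with respect to a measure `μ`. -/
noncomputable def cov {Ω : Type*} [MeasurableSpace Ω] (μ : Measure Ω) (X Y : Ω → ℝ) : ℝ :=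
  ∫ ω, (X ω - ∫ x, X x ∂μ) * (Y ω - ∫ x, Y x ∂μ) ∂μ

/-- Partial sums of the geometric series started at index `a`; the truncated subtraction makes
both sides vanish when `n ≤ a`. -/
lemma geometric_tail_sum (lam : ℝ) (a n : ℕ) :
    (1 - lam) * ∑ j ∈ Finset.range n, (if a ≤ j then lam ^ (j - a) else 0)
      = 1 - lam ^ (n - a) := by
  induction n with
  | zero => simp
  | succ n ih =>
    rw [Finset.sum_range_succ, mul_add, ih]
    split_ifs with h
    · rw [Nat.succ_sub h, pow_succ]
      ring
    · rw [show n - a = 0 by omega, show n + 1 - a = 0 by omega]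
      simp

lemma geometric_tail_sum_fin_le {lam : ℝ} (hlam0 : 0 ≤ lam) (hlam1 : lam < 1) {r : ℕ}
    (i : Fin r) :
    ∑ j : Fin r, (if i ≤ j then lam ^ ((j : ℕ) - (i : ℕ)) else 0) ≤ 1 / (1 - lam) := by
  have h := geometric_tail_sum lam i r
  rw [← Fin.sum_univ_eq_sum_range (fun j => if (i : ℕ) ≤ j then lam ^ (j - (i : ℕ)) else 0)] at h
  simp only [Fin.le_def]
  rw [le_div_iff₀ (by linarith), mul_comm, h]
  linarith [pow_nonneg hlam0 (r - (i : ℕ))]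

/-- Let `X₁, …, X_r` be real random variables on a probability space with
`0 ≤ X_i ≤ M` almost surely for each `i` (where `M > 0`), and let `0 ≤ λ < 1`. If
`Cov(X_i, X_j) ≤ λ^(j - i) * Var(X_i)` for all `i ≤ j`, then
`Var(∑ i, X i) ≤ (2 M / (1 - λ)) * E[∑ i, X i]`. -/
theorem variance_sum_le_of_cov_geometric_bounded {Ω : Type*} [MeasurableSpace Ω]
    (μ : Measure Ω) [IsProbabilityMeasure μ] (r : ℕ) (X : Fin r → Ω → ℝ)
    (hXmeas : ∀ i, AEMeasurable (X i) μ)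
    (M : ℝ) (hM : 0 < M) (hXbdd : ∀ i, ∀ᵐ ω ∂μ, 0 ≤ X i ω ∧ X i ω ≤ M)
    (lam : ℝ) (hlam0 : 0 ≤ lam) (hlam1 : lam < 1)
    (hcov : ∀ i j : Fin r, i ≤ j →
      cov μ (X i) (X j) ≤ lam ^ ((j : ℕ) - (i : ℕ)) * variance (X i) μ) :
    variance (fun ω => ∑ i, X i ω) μ
      ≤ (2 * M / (1 - lam)) * ∫ ω, ∑ i, X i ω ∂μ := by
  have hmem : ∀ i, MemLp (X i) 2 μ := fun i =>
    memLp_of_bounded (hXbdd i) (hXmeas i).aestronglyMeasurable 2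
  have hint : ∀ i, Integrable (X i) μ := fun i => (hmem i).integrable (by norm_num)
  have hvar : ∀ i, variance (X i) μ ≤ M * ∫ ω, X i ω ∂μ := fun i => by
    have h := variance_le_sub_mul_sub (hXbdd i) (hXmeas i)
    nlinarith [sq_nonneg (∫ ω, X i ω ∂μ)]
  let U : Fin r → Fin r → ℝ := fun i j =>
    variance (X i) μ * (if i ≤ j then lam ^ ((j : ℕ) - (i : ℕ)) else 0)
  have hU0 : ∀ i j, 0 ≤ U i j := fun i j =>
    mul_nonneg (variance_nonneg _ _) (by split_ifs <;> positivity)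
  have hUcov : ∀ i j, i ≤ j → covariance (X i) (X j) μ ≤ U i j := fun i j hij => by
    have h : covariance (X i) (X j) μ ≤ _ := hcov i j hij
    simpa [U, hij, mul_comm] using h
  have hle : ∀ i j, covariance (X i) (X j) μ ≤ U i j + U j i := fun i j => by
    rcases le_total i j with h | h
    · linarith [hUcov i j h, hU0 j i]
    · rw [covariance_comm]
      linarith [hUcov j i h, hU0 i j]
  have hUsum : ∀ i, ∑ j, U i j ≤ M / (1 - lam) * ∫ ω, X i ω ∂μ := fun i => by
    have h1 : 0 < 1 - lam := by linarith
    calc ∑ j, U i j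
        ≤ variance (X i) μ * (1 / (1 - lam)) := by
          rw [← Finset.mul_sum]
          exact mul_le_mul_of_nonneg_left (geometric_tail_sum_fin_le hlam0 hlam1 i)
            (variance_nonneg _ _)
      _ ≤ (M * ∫ ω, X i ω ∂μ) * (1 / (1 - lam)) :=
          mul_le_mul_of_nonneg_right (hvar i) (by positivity)
      _ = M / (1 - lam) * ∫ ω, X i ω ∂μ := by ring
  calc variance (fun ω => ∑ i, X i ω) μ
      = ∑ i, ∑ j, covariance (X i) (X j) μ := variance_fun_sum hmem
    _ ≤ ∑ i, ∑ j, (U i j + U j i) :=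
        Finset.sum_le_sum fun i _ => Finset.sum_le_sum fun j _ => hle i j
    _ = 2 * ∑ i, ∑ j, U i j := by
        simp only [Finset.sum_add_distrib]
        rw [Finset.sum_comm (f := fun i j => U j i)]
        ring
    _ ≤ 2 * ∑ i, M / (1 - lam) * ∫ ω, X i ω ∂μ := by
        gcongr with i
        exact hUsum i
    _ = (2 * M / (1 - lam)) * ∫ ω, ∑ i, X i ω ∂μ := by
        rw [integral_finsetSum _ fun i _ => hint i, ← Finset.mul_sum]
        ring
end
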